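/- Let Ω ⊆ ℝ^N be Lebesgue measurable with |Ω| = ∞, T > 0 and φ > 1. Then for every real σ > dim̄_B^φ(∞,Ω), the identity ∫_{B_T(0)^c ∩ Ω} |x|^{-σ-N} dx = (σ + N) ∫_T^{+∞} t^{-σ-N-1} |B_{T,t}(0) ∩ Ω| dt holds and both integrals are finite. -/

import Mathlib

open MeasureTheory Filter Set
open scoped ENNReal NNReal Topology

noncomputable section

/-- The `[a,b)`-shell centered at the origin in `ℝ^N`. -/
def shell (N : ℕ) (a b : ℝ) : Set (EuclideanSpace ℝ (Fin N)) :=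
  {x | a ≤ ‖x‖ ∧ ‖x‖ < b}

/-- The complement of the open ball `B_t(0)` in `ℝ^N`. -/
def farBall (N : ℕ) (t : ℝ) : Set (EuclideanSpace ℝ (Fin N)) :=
  {x | t ≤ ‖x‖}

/-- Upper φ-shell Minkowski content of `Ω` at infinity. -/
def upperShellContent (N : ℕ) (Ω : Set (EuclideanSpace ℝ (Fin N))) (φ r : ℝ) : ℝ≥0∞ :=
  Filter.limsup (fun t : ℝ =>
    volume (shell N t (φ * t) ∩ Ω) / ENNReal.ofReal (t ^ ((N : ℝ) + r))) Filter.atTop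

/-- Lower φ-shell Minkowski content of `Ω` at infinity. -/
def lowerShellContent (N : ℕ) (Ω : Set (EuclideanSpace ℝ (Fin N))) (φ r : ℝ) : ℝ≥0∞ :=
  Filter.liminf (fun t : ℝ =>
    volume (shell N t (φ * t) ∩ Ω) / ENNReal.ofReal (t ^ ((N : ℝ) + r))) Filter.atTop

/-- Upper Minkowski content of `Ω` at infinity. -/
def upperContent (N : ℕ) (Ω : Set (EuclideanSpace ℝ (Fin N))) (r : ℝ) : ℝ≥0∞ :=
  Filter.limsup (fun t : ℝ =>
    volume (farBall N t ∩ Ω) / ENNReal.ofReal (t ^ ((N : ℝ) + r))) Filter.atTop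

/-- Lower Minkowski content of `Ω` at infinity. -/
def lowerContent (N : ℕ) (Ω : Set (EuclideanSpace ℝ (Fin N))) (r : ℝ) : ℝ≥0∞ :=
  Filter.liminf (fun t : ℝ =>
    volume (farBall N t ∩ Ω) / ENNReal.ofReal (t ^ ((N : ℝ) + r))) Filter.atTop

/-- Upper φ-shell Minkowski dimension of `Ω` at infinity, as an extended real. -/
def upperShellDim (N : ℕ) (Ω : Set (EuclideanSpace ℝ (Fin N))) (φ : ℝ) : EReal :=
  sInf ((fun r : ℝ => (r : EReal)) '' {r : ℝ | upperShellContent N Ω φ r = 0})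

/-- Lower φ-shell Minkowski dimension of `Ω` at infinity, as an extended real. -/
def lowerShellDim (N : ℕ) (Ω : Set (EuclideanSpace ℝ (Fin N))) (φ : ℝ) : EReal :=
  sInf ((fun r : ℝ => (r : EReal)) '' {r : ℝ | lowerShellContent N Ω φ r = 0})

theorem measurableSet_shell (N : ℕ) (a b : ℝ) : MeasurableSet (shell N a b) :=
  (measurableSet_le measurable_const measurable_norm).inter
    (measurableSet_lt measurable_norm measurable_const)

theorem measurableSet_farBall (N : ℕ) (t : ℝ) : MeasurableSet (farBall N t) :=
  measurableSet_le measurable_const measurable_norm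

theorem volume_shell_lt_top (N : ℕ) (a b : ℝ) : volume (shell N a b) < ⊤ :=
  (measure_mono (fun x hx => by simpa using hx.2)).trans_lt
    (measure_ball_lt_top (x := (0 : EuclideanSpace ℝ (Fin N))) (r := b))

theorem Real.rpow_le_rpow_add_rpow {a b y : ℝ} (s : ℝ) (ha : 0 < a) (hay : a ≤ y) (hyb : y ≤ b) :
    y ^ s ≤ a ^ s + b ^ s := by
  have hy : 0 < y := ha.trans_le hay
  have hb : 0 < b := hy.trans_le hyb
  rcases le_total 0 s with hs | hs
  · exact (Real.rpow_le_rpow hy.le hyb hs).trans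
      (le_add_of_nonneg_left (Real.rpow_nonneg ha.le s))
  · exact (Real.rpow_le_rpow_of_nonpos ha hay hs).trans
      (le_add_of_nonneg_right (Real.rpow_nonneg hb.le s))

theorem setLIntegral_shell_rpow_norm_le (N : ℕ) (Ω : Set (EuclideanSpace ℝ (Fin N)))
    (hΩ : MeasurableSet Ω) {a b : ℝ} (s : ℝ) (ha : 0 < a) :
    ∫⁻ x in shell N a b ∩ Ω, ENNReal.ofReal (‖x‖ ^ s) ≤
      ENNReal.ofReal (a ^ s + b ^ s) * volume (shell N a b ∩ Ω) := by
  rw [← setLIntegral_const]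
  refine setLIntegral_mono' ((measurableSet_shell N a b).inter hΩ) fun x hx => ?_
  exact ENNReal.ofReal_le_ofReal (Real.rpow_le_rpow_add_rpow s ha hx.1.1 hx.1.2.le)

theorem farBall_subset_iUnion_shell (N : ℕ) {a φ : ℝ} (T : ℝ) (ha : 0 < a) (hφ : 1 < φ) :
    farBall N T ⊆ shell N T a ∪ ⋃ n : ℕ, shell N (a * φ ^ n) (φ * (a * φ ^ n)) := by
  intro x hx
  rcases lt_or_ge ‖x‖ a with h | h
  · exact Or.inl ⟨hx, h⟩
  · obtain ⟨n, hn, hn'⟩ := exists_nat_pow_near ((one_le_div ha).2 h) hφ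
    refine Or.inr (mem_iUnion.2 ⟨n, ?_, ?_⟩)
    · rw [le_div_iff₀ ha] at hn
      linarith
    · rw [div_lt_iff₀ ha, pow_succ] at hn'
      linarith

/-- Summing over geometric shells: a vanishing `r`-dimensional shell content makes `‖x‖ ^ s`
integrable at infinity on `Ω` as soon as `s + N + r < 0`. -/
theorem setLIntegral_farBall_rpow_norm_lt_top (N : ℕ) (Ω : Set (EuclideanSpace ℝ (Fin N)))
    (hΩ : MeasurableSet Ω) {T φ r s : ℝ} (hT : 0 < T) (hφ : 1 < φ)
    (hr : upperShellContent N Ω φ r = 0) (hs : s + (N + r) < 0) :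
    ∫⁻ x in farBall N T ∩ Ω, ENNReal.ofReal (‖x‖ ^ s) < ⊤ := by
  have hφ0 : 0 < φ := one_pos.trans hφ
  have hev : ∀ᶠ t : ℝ in atTop,
      volume (shell N t (φ * t) ∩ Ω) / ENNReal.ofReal (t ^ ((N : ℝ) + r)) < 1 :=
    eventually_lt_of_limsup_lt (hr.trans_lt one_pos)
  obtain ⟨t₀, ht₀⟩ := eventually_atTop.1 hev
  set a := max t₀ 1
  have ha : 0 < a := one_pos.trans_le (le_max_right _ _)
  set p := s + (N + r) with hp
  have hshell (n : ℕ) :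
      ∫⁻ x in shell N (a * φ ^ n) (φ * (a * φ ^ n)) ∩ Ω, ENNReal.ofReal (‖x‖ ^ s) ≤
        ENNReal.ofReal ((1 + φ ^ s) * a ^ p * (φ ^ p) ^ n) := by
    have hφn : 0 < φ ^ n := pow_pos hφ0 n
    set b := a * φ ^ n with hb_def
    have hb : 0 < b := mul_pos ha hφn
    have hab : t₀ ≤ b :=
      (le_max_left _ _).trans (le_mul_of_one_le_right ha.le (one_le_pow₀ hφ.le))
    have hvol : volume (shell N b (φ * b) ∩ Ω) ≤ ENNReal.ofReal (b ^ ((N : ℝ) + r)) := by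
      have h := (ht₀ b hab).le
      rwa [ENNReal.div_le_iff (by simpa using Real.rpow_pos_of_pos hb _) ENNReal.ofReal_ne_top,
        one_mul] at h
    refine (setLIntegral_shell_rpow_norm_le N Ω hΩ s hb).trans
      ((mul_le_mul_right hvol _).trans_eq ?_)
    rw [← ENNReal.ofReal_mul (by positivity)]
    congr 1
    have hbp : b ^ p = a ^ p * (φ ^ p) ^ n := by
      rw [hb_def, Real.mul_rpow ha.le hφn.le, ← Real.rpow_natCast, ← Real.rpow_natCast,
        ← Real.rpow_mul hφ0.le, ← Real.rpow_mul hφ0.le, mul_comm p]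
    rw [mul_assoc, ← hbp, hp, Real.rpow_add hb s, Real.mul_rpow hφ0.le hb.le]
    ring
  have hsum : Summable fun n : ℕ => (1 + φ ^ s) * a ^ p * (φ ^ p) ^ n :=
    (summable_geometric_of_lt_one (by positivity)
      (Real.rpow_lt_one_of_one_lt_of_neg hφ hs)).mul_left _
  have hcover : farBall N T ∩ Ω ⊆ (shell N T a ∩ Ω) ∪
      ⋃ n : ℕ, shell N (a * φ ^ n) (φ * (a * φ ^ n)) ∩ Ω := by
    rw [← iUnion_inter, ← union_inter_distrib_right]
    exact inter_subset_inter_left _ (farBall_subset_iUnion_shell N T ha hφ)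
  refine ((lintegral_mono_set hcover).trans (lintegral_union_le _ _ _)).trans_lt
    (ENNReal.add_lt_top.2 ⟨?_, ?_⟩)
  · refine (setLIntegral_shell_rpow_norm_le N Ω hΩ s hT).trans_lt
      (ENNReal.mul_lt_top ENNReal.ofReal_lt_top ?_)
    exact (measure_mono inter_subset_left).trans_lt (volume_shell_lt_top N T a)
  · refine ((lintegral_iUnion_le _ _).trans (ENNReal.tsum_le_tsum hshell)).trans_lt ?_
    exact hsum.tsum_ofReal_lt_top

theorem ofReal_rpow_neg_eq_lintegral_Ioi {p y : ℝ} (hp : 0 < p) (hy : 0 < y) :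
    ENNReal.ofReal (y ^ (-p)) =
      ENNReal.ofReal p * ∫⁻ t in Ioi y, ENNReal.ofReal (t ^ (-p - 1)) := by
  rw [← ofReal_integral_eq_lintegral_ofReal
      (integrableOn_Ioi_rpow_of_lt (by linarith) hy)
      ((ae_restrict_mem measurableSet_Ioi).mono fun t ht =>
        Real.rpow_nonneg (hy.trans ht).le _),
    integral_Ioi_rpow_of_lt (by linarith) hy, ← ENNReal.ofReal_mul hp.le, sub_add_cancel]
  congr 1
  field_simp

/-- The layer-cake identity for `‖x‖ ^ (-p)` on the far part of `Ω`. -/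
theorem setLIntegral_farBall_rpow_norm_eq (N : ℕ) (Ω : Set (EuclideanSpace ℝ (Fin N)))
    (hΩ : MeasurableSet Ω) {T p : ℝ} (hT : 0 < T) (hp : 0 < p) :
    ∫⁻ x in farBall N T ∩ Ω, ENNReal.ofReal (‖x‖ ^ (-p)) =
      ENNReal.ofReal p *
        ∫⁻ t in Ioi T, ENNReal.ofReal (t ^ (-p - 1)) * volume (shell N T t ∩ Ω) := by
  have hS : MeasurableSet (farBall N T ∩ Ω) := (measurableSet_farBall N T).inter hΩ
  let K : EuclideanSpace ℝ (Fin N) → ℝ → ℝ≥0∞ := fun x t =>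
    (Ioi ‖x‖).indicator (fun t => ENNReal.ofReal (t ^ (-p - 1))) t
  have hK : Measurable (Function.uncurry K) := by
    have : Function.uncurry K = {z : EuclideanSpace ℝ (Fin N) × ℝ | ‖z.1‖ < z.2}.indicator
        fun z => ENNReal.ofReal (z.2 ^ (-p - 1)) := by
      ext z
      simp [K, Function.uncurry, indicator]
    rw [this]
    exact Measurable.indicator (by fun_prop)
      (measurableSet_lt measurable_fst.norm measurable_snd)
  calc ∫⁻ x in farBall N T ∩ Ω, ENNReal.ofReal (‖x‖ ^ (-p))
      = ∫⁻ x in farBall N T ∩ Ω, ENNReal.ofReal p * ∫⁻ t in Ioi T, K x t := by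
        refine setLIntegral_congr_fun hS fun x hx => ?_
        have hx' : T ≤ ‖x‖ := hx.1
        simp only [K]
        rw [ofReal_rpow_neg_eq_lintegral_Ioi hp (hT.trans_le hx'),
          setLIntegral_indicator measurableSet_Ioi,
          inter_eq_self_of_subset_left (Ioi_subset_Ioi hx')]
    _ = ENNReal.ofReal p * ∫⁻ t in Ioi T, ∫⁻ x in farBall N T ∩ Ω, K x t := by
        rw [lintegral_const_mul' _ _ ENNReal.ofReal_ne_top,
          lintegral_lintegral_swap hK.aemeasurable]
    _ = _ := by
        congr 1
        refine lintegral_congr fun t => ?_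
        have hKt : (fun x => K x t) = {x : EuclideanSpace ℝ (Fin N) | ‖x‖ < t}.indicator
            fun _ => ENNReal.ofReal (t ^ (-p - 1)) := by
          ext x
          simp [K, indicator]
        rw [hKt, lintegral_indicator_const (measurableSet_lt measurable_norm measurable_const),
          Measure.restrict_apply (measurableSet_lt measurable_norm measurable_const)]
        congr 2
        ext x
        simp only [shell, farBall, mem_inter_iff, mem_ofPred_eq]
        tauto

theorem nonneg_of_upperShellContent_eq_zero (N : ℕ) (Ω : Set (EuclideanSpace ℝ (Fin N)))
    (hΩ : MeasurableSet Ω) (hvol : volume Ω = ⊤) {φ r : ℝ} (hφ : 1 < φ)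
    (hr : upperShellContent N Ω φ r = 0) : 0 ≤ (N : ℝ) + r := by
  by_contra! h
  have hfar := setLIntegral_farBall_rpow_norm_lt_top N Ω hΩ one_pos hφ hr
    (s := 0) (by linarith)
  simp only [Real.rpow_zero, ENNReal.ofReal_one, setLIntegral_one] at hfar
  have hsub : Ω ⊆ shell N 0 1 ∪ (farBall N 1 ∩ Ω) := fun x hx =>
    (lt_or_ge ‖x‖ 1).imp (fun h => ⟨norm_nonneg x, h⟩) fun h => ⟨h, hx⟩
  exact (((measure_mono hsub).trans (measure_union_le _ _)).trans_lt
    (ENNReal.add_lt_top.2 ⟨volume_shell_lt_top N 0 1, hfar⟩)).ne hvol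

theorem zeta_functional_identity_infinite_measure
    (N : ℕ) (Ω : Set (EuclideanSpace ℝ (Fin N))) (hΩ : MeasurableSet Ω)
    (hvol : volume Ω = ⊤) (T : ℝ) (hT : 0 < T) (φ : ℝ) (hφ : 1 < φ)
    (σ : ℝ) (hσ : upperShellDim N Ω φ < (σ : EReal)) :
    (∫⁻ x in farBall N T ∩ Ω, ENNReal.ofReal (‖x‖ ^ (-σ - (N : ℝ))) =
      ENNReal.ofReal (σ + N) *
        ∫⁻ t in Ioi T, ENNReal.ofReal (t ^ (-σ - (N : ℝ) - 1)) * volume (shell N T t ∩ Ω)) ∧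
    (∫⁻ x in farBall N T ∩ Ω, ENNReal.ofReal (‖x‖ ^ (-σ - (N : ℝ)))) < ⊤ := by
  obtain ⟨_, ⟨r, hr, rfl⟩, hrσ⟩ := sInf_lt_iff.1 hσ
  have hrσ' : r < σ := EReal.coe_lt_coe_iff.1 hrσ
  have hNr := nonneg_of_upperShellContent_eq_zero N Ω hΩ hvol hφ hr
  refine ⟨?_, setLIntegral_farBall_rpow_norm_lt_top N Ω hΩ hT hφ hr (by linarith)⟩
  have hneg : -σ - (N : ℝ) = -(σ + N) := by ring
  rw [hneg]
  exact setLIntegral_farBall_rpow_norm_eq N Ω hΩ hT (by linarith)
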